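/- Let p ≥ 1 and k ≥ 0 be integers and let B be the broom consisting of a path v_1, …, v_p with k pendant leaves attached to v_1, and set v = v_1. Then the number of subtrees of B containing v is 2^k·p, the number of subtrees of B not containing v is k + C(p,2), and hence N(B) = 2^k·p + k + C(p,2), where C(p,2) = p(p−1)/2. -/

import Mathlib

/-- A subtree of a graph: a nonempty set of vertices inducing a connected subgraph. -/
def IsSubtree {V : Type*} (G : SimpleGraph V) (S : Finset V) : Prop :=
  S.Nonempty ∧ (G.induce (S : Set V)).Connected

/-- `N(T)`: the number of subtrees. -/
noncomputable def numSubtrees {V : Type*} [Fintype V] (G : SimpleGraph V) : ℕ :=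
  Nat.card {S : Finset V // IsSubtree G S}

/-- `N(T,v)`: the number of subtrees containing the vertex `v`. -/
noncomputable def numSubtreesContaining {V : Type*} [Fintype V] (G : SimpleGraph V) (v : V) : ℕ :=
  Nat.card {S : Finset V // IsSubtree G S ∧ v ∈ S}

/-- The broom with parameters `p` and `k`: a path `v_1, …, v_p` (the `Sum.inl` vertices,
where `v_1 = Sum.inl 0`) together with `k` pendant leaves (the `Sum.inr` vertices)
attached to `v_1`. -/
def broom (p k : ℕ) : SimpleGraph (Fin p ⊕ Fin k) :=
  SimpleGraph.fromRel fun a b => match a, b with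
    | Sum.inl i, Sum.inl j => (i : ℕ) + 1 = (j : ℕ)
    | Sum.inl i, Sum.inr _ => (i : ℕ) = 0
    | _, _ => False

/-!
A subtree of the broom containing `v_1` is a subtree of the path containing `v_1` together with an
arbitrary set of leaves; a subtree avoiding `v_1` is a single leaf or a subtree of the path avoiding
`v_1`. This reduces both counts to the path, the Hasse diagram of a finite linear order, whose
subtrees are exactly the nonempty intervals `[a, b]`. There are `C(p + 1, 2)` of these, `p` of them
contain `v_1`, and hence `C(p, 2)` avoid it.
-/

open Finset SimpleGraph

section Subtrees

variable {V W : Type*}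

/-- `N(T) - N(T,v)`: the number of subtrees not containing the vertex `v`, counted directly so that
no truncated subtraction is involved. -/
noncomputable def numSubtreesAvoiding [Fintype V] (G : SimpleGraph V) (v : V) : ℕ :=
  Nat.card {S : Finset V // IsSubtree G S ∧ v ∉ S}

theorem numSubtrees_eq_containing_add_avoiding [Fintype V] (G : SimpleGraph V) (v : V) :
    numSubtrees G = numSubtreesContaining G v + numSubtreesAvoiding G v :=
  (Set.ncard_inter_add_ncard_sdiff_eq_ncard {S | IsSubtree G S} {S | v ∈ S}).symm

theorem isSubtree_singleton (G : SimpleGraph V) (v : V) : IsSubtree G {v} := by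
  refine ⟨singleton_nonempty v, ?_⟩
  rw [coe_singleton]
  exact Connected.of_subsingleton

theorem isSubtree_map_iff {G : SimpleGraph V} {H : SimpleGraph W} (f : G ↪g H) {S : Finset V} :
    IsSubtree H (S.map f.toEmbedding) ↔ IsSubtree G S := by
  let e : G.induce (S : Set V) ≃g H.induce (S.map f.toEmbedding : Set W) :=
    { toEquiv := (Equiv.Set.image f S f.injective).trans (Equiv.setCongr (coe_map _ _).symm)
      map_rel_iff' := f.map_adj_iff }
  rw [IsSubtree, IsSubtree, map_nonempty, e.connected_iff]

theorem IsSubtree.eq_singleton_of_forall_not_adj {G : SimpleGraph V} {S : Finset V} {v : V}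
    (hS : IsSubtree G S) (hv : v ∈ S) (isolated : ∀ w ∈ S, ¬ G.Adj v w) : S = {v} := by
  by_contra hne
  have : Nontrivial (S : Set V) :=
    Set.nontrivial_coe_sort.2 ((nontrivial_iff_ne_singleton hv).2 hne)
  obtain ⟨w, hw⟩ := hS.2.preconnected.exists_adj_of_nontrivial ⟨v, hv⟩
  exact isolated w w.2 hw

end Subtrees

section AttachLeaves

variable {V ι : Type*}

/-- The graph obtained from `H` by attaching to the vertex `r` one pendant leaf for each element
of `ι`; the old vertices are the `Sum.inl` ones and the leaves are the `Sum.inr` ones. -/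
def attachLeaves (H : SimpleGraph V) (r : V) (ι : Type*) : SimpleGraph (V ⊕ ι) where
  Adj
    | .inl v, .inl w => H.Adj v w
    | .inl v, .inr _ => v = r
    | .inr _, .inl w => w = r
    | .inr _, .inr _ => False
  symm.symm
    | .inl _, .inl _ => H.adj_symm
    | .inl _, .inr _ | .inr _, .inl _ | .inr _, .inr _ => id
  loopless.irrefl
    | .inl v => H.loopless.irrefl v
    | .inr _ => id

variable {H : SimpleGraph V} {r : V}

namespace attachLeaves

/-- The original graph `H` as an induced subgraph of `attachLeaves H r ι`. -/
def inl (H : SimpleGraph V) (r : V) (ι : Type*) : H ↪g attachLeaves H r ι where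
  toEmbedding := .inl
  map_rel_iff' := .rfl

theorem isSubtree_iff_of_inl_mem {S : Finset (V ⊕ ι)} (hr : Sum.inl r ∈ S) :
    IsSubtree (attachLeaves H r ι) S ↔ IsSubtree H S.toLeft := by
  have hr' : r ∈ S.toLeft := mem_toLeft.2 hr
  constructor
  · intro hS
    -- Collapsing every leaf onto `r` maps each edge to an edge or to a single vertex.
    let collapse : ↥(S : Set (V ⊕ ι)) → ↥(S.toLeft : Set V)
      | ⟨.inl v, hv⟩ => ⟨v, mem_toLeft.2 hv⟩
      | ⟨.inr _, _⟩ => ⟨r, hr'⟩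
    have reachable_collapse : ∀ x y, ((attachLeaves H r ι).induce (S : Set (V ⊕ ι))).Adj x y →
        (H.induce (S.toLeft : Set V)).Reachable (collapse x) (collapse y) := by
      rintro ⟨v | i, hx⟩ ⟨w | j, hy⟩ hadj
      · exact Adj.reachable (G := H.induce (S.toLeft : Set V)) hadj
      · obtain rfl : v = r := hadj
        exact .rfl
      · obtain rfl : w = r := hadj
        exact .rfl
      · exact hadj.elim
    refine ⟨⟨r, hr'⟩, connected_iff_exists_forall_reachable _ |>.2 ⟨⟨r, hr'⟩, fun v => ?_⟩⟩
    have hv := hS.2.preconnected ⟨.inl r, hr⟩ ⟨.inl v, mem_toLeft.1 v.2⟩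
    simp only [reachable_iff_reflTransGen] at hv reachable_collapse ⊢
    exact hv.lift' collapse reachable_collapse
  · intro hT
    refine ⟨⟨_, hr⟩, connected_iff_exists_forall_reachable _ |>.2 ⟨⟨.inl r, hr⟩, ?_⟩⟩
    rintro ⟨v | i, hx⟩
    · exact (hT.2.preconnected ⟨r, hr'⟩ ⟨v, mem_toLeft.2 hx⟩).map
        (induceHom (inl H r ι).toHom fun _ => mem_toLeft.1)
    · have hadj : ((attachLeaves H r ι).induce (S : Set (V ⊕ ι))).Adj ⟨.inl r, hr⟩ ⟨.inr i, hx⟩ :=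
        rfl
      exact hadj.reachable

theorem isSubtree_and_inl_notMem_iff {S : Finset (V ⊕ ι)} :
    IsSubtree (attachLeaves H r ι) S ∧ Sum.inl r ∉ S ↔
      (∃ i, {Sum.inr i} = S) ∨ ∃ T, (IsSubtree H T ∧ r ∉ T) ∧ T.map .inl = S := by
  constructor
  · rintro ⟨hS, hr⟩
    by_cases hleaf : ∃ i, Sum.inr i ∈ S
    · obtain ⟨i, hi⟩ := hleaf
      refine .inl ⟨i, (hS.eq_singleton_of_forall_not_adj hi ?_).symm⟩
      rintro (w | j) hw hadj
      · obtain rfl : w = r := hadj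
        exact hr hw
      · exact hadj
    · have hmap : S.toLeft.map .inl = S := by
        ext (v | i)
        · simp
        · simpa using fun hi => hleaf ⟨i, hi⟩
      refine .inr ⟨S.toLeft, ⟨(isSubtree_map_iff (inl H r ι)).1 ?_, by simpa using hr⟩, hmap⟩
      exact hmap.symm ▸ hS
  · rintro (⟨i, rfl⟩ | ⟨T, ⟨hT, hr⟩, rfl⟩)
    · exact ⟨isSubtree_singleton _ _, by simp⟩
    · exact ⟨(isSubtree_map_iff (inl H r ι)).2 hT, by simpa using hr⟩

end attachLeaves

variable [Fintype V] [Fintype ι]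

theorem numSubtreesContaining_attachLeaves (H : SimpleGraph V) (r : V) :
    numSubtreesContaining (attachLeaves H r ι) (.inl r) =
      2 ^ Fintype.card ι * numSubtreesContaining H r := by
  have image_disjSum : {S | IsSubtree (attachLeaves H r ι) S ∧ .inl r ∈ S} =
      (fun p : Finset ι × Finset V => p.2.disjSum p.1) ''
        (Set.univ ×ˢ {T | IsSubtree H T ∧ r ∈ T}) := by
    ext S
    constructor
    · rintro ⟨hS, hr⟩
      exact ⟨(S.toRight, S.toLeft),
        ⟨trivial, (attachLeaves.isSubtree_iff_of_inl_mem hr).1 hS, mem_toLeft.2 hr⟩,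
        toLeft_disjSum_toRight⟩
    · rintro ⟨⟨L, T⟩, ⟨-, hT, hr⟩, rfl⟩
      have hr' : Sum.inl r ∈ T.disjSum L := inl_mem_disjSum.2 hr
      exact ⟨(attachLeaves.isSubtree_iff_of_inl_mem hr').2 (toLeft_disjSum.symm ▸ hT), hr'⟩
  have injective_disjSum : (fun p : Finset ι × Finset V => p.2.disjSum p.1).Injective :=
    fun _ _ h => Prod.ext (disjSum_inj.1 h).2 (disjSum_inj.1 h).1
  calc numSubtreesContaining (attachLeaves H r ι) (.inl r)
      = (Set.univ ×ˢ {T | IsSubtree H T ∧ r ∈ T} : Set (Finset ι × Finset V)).ncard := by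
        rw [← Set.ncard_image_of_injective _ injective_disjSum, ← image_disjSum]
        rfl
    _ = 2 ^ Fintype.card ι * numSubtreesContaining H r := by
        rw [Set.ncard_prod, Set.ncard_univ, Nat.card_eq_fintype_card, Fintype.card_finset]
        rfl

theorem numSubtreesAvoiding_attachLeaves (H : SimpleGraph V) (r : V) :
    numSubtreesAvoiding (attachLeaves H r ι) (.inl r) =
      Fintype.card ι + numSubtreesAvoiding H r := by
  let leaf (i : ι) : Finset (V ⊕ ι) := {.inr i}
  let embed (T : Finset V) : Finset (V ⊕ ι) := T.map .inl
  have split : {S | IsSubtree (attachLeaves H r ι) S ∧ .inl r ∉ S} =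
      Set.range leaf ∪ embed '' {T | IsSubtree H T ∧ r ∉ T} :=
    Set.ext fun S => attachLeaves.isSubtree_and_inl_notMem_iff
  have disjoint : Disjoint (Set.range leaf) (embed '' {T | IsSubtree H T ∧ r ∉ T}) := by
    rw [Set.disjoint_left]
    rintro _ ⟨i, rfl⟩ ⟨T, -, hT⟩
    have : Sum.inr i ∈ embed T := hT ▸ mem_singleton_self _
    simp [embed] at this
  have leaf_injective : leaf.Injective := fun i j h => Sum.inr_injective (singleton_injective h)
  calc numSubtreesAvoiding (attachLeaves H r ι) (.inl r)
      = (Set.range leaf ∪ embed '' {T | IsSubtree H T ∧ r ∉ T}).ncard := by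
        rw [← split]
        rfl
    _ = (Set.range leaf).ncard + (embed '' {T | IsSubtree H T ∧ r ∉ T}).ncard :=
        Set.ncard_union_eq disjoint
    _ = Fintype.card ι + numSubtreesAvoiding H r := by
        rw [← Set.image_univ, Set.ncard_image_of_injective _ leaf_injective,
          Set.ncard_image_of_injective _ (Finset.map_injective _), Set.ncard_univ,
          Nat.card_eq_fintype_card]
        rfl

end AttachLeaves

section Hasse

variable {α : Type*}

theorem Icc_min'_max'_of_ordConnected [LinearOrder α] [LocallyFiniteOrder α] {S : Finset α}
    (hne : S.Nonempty) (hS : (S : Set α).OrdConnected) : Icc (S.min' hne) (S.max' hne) = S :=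
  Subset.antisymm
    (fun _ hx => hS.out (S.min'_mem hne) (S.max'_mem hne) (mem_Icc.1 hx))
    fun x hx => mem_Icc.2 ⟨S.min'_le x hx, S.le_max' x hx⟩

theorem induce_hasse_of_ordConnected [PartialOrder α] {s : Set α} (hs : s.OrdConnected) :
    (hasse α).induce s = hasse s := by
  have covBy_iff (a b : s) : (a : α) ⋖ b ↔ a ⋖ b :=
    Set.OrdConnected.apply_covBy_apply_iff (OrderEmbedding.subtype (· ∈ s))
      (by simpa using hs)
  ext a b
  simp only [comap_adj, hasse_adj, Function.Embedding.subtype_apply, covBy_iff]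

theorem ordConnected_of_induce_hasse_preconnected [LinearOrder α] {s : Set α}
    (hs : ((hasse α).induce s).Preconnected) : s.OrdConnected := by
  refine ⟨fun a ha b hb c ⟨hac, hcb⟩ => ?_⟩
  by_contra hc
  have hac' : a < c := hac.lt_of_ne fun h => hc (h ▸ ha)
  obtain ⟨w⟩ := hs ⟨a, ha⟩ ⟨b, hb⟩
  obtain ⟨⟨⟨x, y⟩, hxy⟩, -, (hxc : (x : α) < c), hyc⟩ :=
    w.exists_boundary_dart {z | (z : α) < c} hac' hcb.not_gt
  have hcy : c < y := (not_lt.1 hyc).lt_of_ne fun h => hc (h ▸ y.2)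
  rcases hxy with hxy | hyx
  · exact hxy.2 hxc hcy
  · exact (hxc.trans hcy).not_gt hyx.lt

variable [LinearOrder α] [LocallyFiniteOrder α]

theorem isSubtree_hasse_iff {S : Finset α} :
    IsSubtree (hasse α) S ↔ ∃ a b, a ≤ b ∧ Icc a b = S := by
  constructor
  · rintro ⟨hne, hS⟩
    exact ⟨S.min' hne, S.max' hne, S.min'_le_max' hne, Icc_min'_max'_of_ordConnected hne
      (ordConnected_of_induce_hasse_preconnected hS.preconnected)⟩
  · rintro ⟨a, b, hab, rfl⟩
    refine ⟨nonempty_Icc.2 hab, ?_⟩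
    rw [coe_Icc, induce_hasse_of_ordConnected Set.ordConnected_Icc]
    let := LinearLocallyFiniteOrder.succOrder α
    have := Set.ordConnected_Icc (a := a) (b := b)
    have : Nonempty (Set.Icc a b) := ⟨⟨a, Set.left_mem_Icc.2 hab⟩⟩
    exact ⟨hasse_preconnected_of_succ _⟩

theorem injOn_Icc : Set.InjOn (fun p : α × α => Icc p.1 p.2) {p | p.1 ≤ p.2} := by
  rintro ⟨a, b⟩ hab ⟨c, d⟩ - h
  have h : Set.Icc a b = Set.Icc c d := by simpa using congrArg ((↑) : Finset α → Set α) h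
  exact Prod.ext_iff.2 ((Set.Icc_eq_Icc_iff hab).1 h)

variable [Fintype α]

theorem numSubtrees_hasse : numSubtrees (hasse α) = (Fintype.card α + 1).choose 2 := by
  have image_Icc : {S | IsSubtree (hasse α) S} =
      (fun p : α × α => Icc p.1 p.2) '' {p | p.1 ≤ p.2} := by
    ext S
    simp [isSubtree_hasse_iff]
  calc numSubtrees (hasse α)
      = {p : α × α | p.1 ≤ p.2}.ncard := by
        rw [← injOn_Icc.ncard_image, ← image_Icc]
        rfl
    _ = Nat.card (Sym2 α) := (Nat.card_congr Sym2.sortEquiv).symm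
    _ = (Fintype.card α + 1).choose 2 := by rw [Nat.card_eq_fintype_card, Sym2.card]

theorem numSubtreesContaining_hasse (v : α) :
    numSubtreesContaining (hasse α) v = (Set.Iic v).ncard * (Set.Ici v).ncard := by
  have image_Icc : {S | IsSubtree (hasse α) S ∧ v ∈ S} =
      (fun p : α × α => Icc p.1 p.2) '' (Set.Iic v ×ˢ Set.Ici v) := by
    ext S
    constructor
    · rintro ⟨hS, hv⟩
      obtain ⟨a, b, -, rfl⟩ := isSubtree_hasse_iff.1 hS
      exact ⟨(a, b), mem_Icc.1 hv, rfl⟩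
    · rintro ⟨⟨a, b⟩, hv, rfl⟩
      exact ⟨isSubtree_hasse_iff.2 ⟨a, b, hv.1.trans hv.2, rfl⟩, mem_Icc.2 hv⟩
  rw [← Set.ncard_prod, ← (injOn_Icc.mono fun _ hp => hp.1.trans hp.2).ncard_image,
    ← image_Icc]
  rfl

theorem numSubtreesContaining_hasse_of_isBot {v : α} (hv : IsBot v) :
    numSubtreesContaining (hasse α) v = Fintype.card α := by
  have hIic : Set.Iic v = {v} := hv.isMin.Iic_eq
  have hIci : Set.Ici v = Set.univ := Set.eq_univ_of_forall hv
  rw [numSubtreesContaining_hasse, hIic, hIci, Set.ncard_singleton, one_mul, Set.ncard_univ,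
    Nat.card_eq_fintype_card]

theorem numSubtreesAvoiding_hasse_of_isBot {v : α} (hv : IsBot v) :
    numSubtreesAvoiding (hasse α) v = (Fintype.card α).choose 2 := by
  have total := numSubtrees_eq_containing_add_avoiding (hasse α) v
  rw [numSubtrees_hasse, numSubtreesContaining_hasse_of_isBot hv, Nat.choose_succ_succ,
    Nat.choose_one_right] at total
  exact (Nat.add_left_cancel total).symm

end Hasse

theorem broom_eq_attachLeaves {p k : ℕ} (hp : 0 < p) :
    broom p k = attachLeaves (pathGraph p) ⟨0, hp⟩ (Fin k) := by
  ext (i | i) (j | j)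
  · simp only [broom, fromRel_adj, attachLeaves, pathGraph_adj, ne_eq, Sum.inl.injEq, Fin.ext_iff]
    omega
  all_goals simp [broom, attachLeaves, Fin.ext_iff]

theorem stmt19 (p k : ℕ) (hp : 0 < p) :
    numSubtreesContaining (broom p k) (Sum.inl ⟨0, hp⟩) = 2 ^ k * p ∧
    Nat.card {S : Finset (Fin p ⊕ Fin k) //
      IsSubtree (broom p k) S ∧ Sum.inl ⟨0, hp⟩ ∉ S} = k + p.choose 2 ∧
    numSubtrees (broom p k) = 2 ^ k * p + k + p.choose 2 := by
  have isBot_zero : IsBot (⟨0, hp⟩ : Fin p) := fun i => Nat.zero_le i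
  have containing : numSubtreesContaining (broom p k) (Sum.inl ⟨0, hp⟩) = 2 ^ k * p := by
    rw [broom_eq_attachLeaves hp, numSubtreesContaining_attachLeaves, pathGraph,
      numSubtreesContaining_hasse_of_isBot isBot_zero, Fintype.card_fin, Fintype.card_fin]
  have avoiding : numSubtreesAvoiding (broom p k) (Sum.inl ⟨0, hp⟩) = k + p.choose 2 := by
    rw [broom_eq_attachLeaves hp, numSubtreesAvoiding_attachLeaves, pathGraph,
      numSubtreesAvoiding_hasse_of_isBot isBot_zero, Fintype.card_fin, Fintype.card_fin]
  refine ⟨containing, avoiding, ?_⟩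
  rw [numSubtrees_eq_containing_add_avoiding _ (Sum.inl ⟨0, hp⟩), containing, avoiding, add_assoc]
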